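/- arXiv:1408.6552 — 5 statements merged into one kernel-verified Lean document; each statement's English description precedes it below -/
import Mathlib

section
/- A framework G(p) in ℝ^d (with all points pairwise distinct) is globally bearing rigid if and only if Null(R^κ(p)) = Null(R(p)), or equivalently rank(R^κ(p)) = rank(R(p)). -/
/-- `projL x` is the orthogonal projection matrix
`P_x = I - (x/‖x‖)(x/‖x‖)ᵀ`, i.e. `projL x y = y - ⟪x,y⟫/‖x‖² • x`. -/
noncomputable def projL {d : ℕ} (x : EuclideanSpace ℝ (Fin d)) :
    EuclideanSpace ℝ (Fin d) →ₗ[ℝ] EuclideanSpace ℝ (Fin d) :=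
  LinearMap.id - (‖x‖ ^ 2)⁻¹ •
    (LinearMap.toSpanSingleton ℝ (EuclideanSpace ℝ (Fin d)) x ∘ₗ (innerSL ℝ x).toLinearMap)

/-- The bearing rigidity matrix `R(p) = diag(P_{g_k}/‖e_k‖)(H ⊗ I_d)` of the framework
whose `k`-th oriented edge goes from vertex `(E k).1` to vertex `(E k).2`
(so `e_k = p_{(E k).2} - p_{(E k).1}` and `g_k = e_k/‖e_k‖`), viewed as a linear map
`ℝ^{dn} → ℝ^{dm}`. -/
noncomputable def bearingMap {d n : ℕ} {ι : Type*} (E : ι → Fin n × Fin n)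
    (p : Fin n → EuclideanSpace ℝ (Fin d)) :
    (Fin n → EuclideanSpace ℝ (Fin d)) →ₗ[ℝ] (ι → EuclideanSpace ℝ (Fin d)) :=
  LinearMap.pi fun k =>
    (‖p (E k).2 - p (E k).1‖⁻¹ • projL (p (E k).2 - p (E k).1)) ∘ₗ
      ((LinearMap.proj (R := ℝ) (φ := fun _ : Fin n => EuclideanSpace ℝ (Fin d)) (E k).2) -
       (LinearMap.proj (R := ℝ) (φ := fun _ : Fin n => EuclideanSpace ℝ (Fin d)) (E k).1))

/-! The weight `‖e_k‖⁻¹` of a row block of `R(p)` is nonzero unless `e_k` is a loop, and on a loop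
bearing equivalence is no condition. Hence `Null(R(p))` is the set of configurations bearing
equivalent to `p`, and `Null(R^κ(p))` the set of those bearing congruent to `p`, so global rigidity
is the inclusion `Null(R(p)) ⊆ Null(R^κ(p))`. The opposite inclusion always holds because the rows
of `R(p)` are among those of `R^κ(p)`, and by rank–nullity it is an equality exactly when the ranks
agree. -/

section LinearAlgebra

variable {K V W W' : Type*} [DivisionRing K] [AddCommGroup V] [Module K V] [FiniteDimensional K V]
  [AddCommGroup W] [Module K W] [AddCommGroup W'] [Module K W']

theorem ker_eq_ker_iff_finrank_range_eq_of_le {f : V →ₗ[K] W} {g : V →ₗ[K] W'}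
    (hle : LinearMap.ker f ≤ LinearMap.ker g) :
    LinearMap.ker f = LinearMap.ker g ↔
      Module.finrank K (LinearMap.range f) = Module.finrank K (LinearMap.range g) := by
  have hf := f.finrank_range_add_finrank_ker
  have hg := g.finrank_range_add_finrank_ker
  constructor
  · intro hker
    rw [hker] at hf
    omega
  · intro hrank
    exact Submodule.eq_of_le_of_finrank_eq hle (by omega)

end LinearAlgebra

section Bearing

variable {d n : ℕ} {ι κ : Type*}

/-- Bearing equivalence of `G(p)` and `G(p')`, where `G` is given by its oriented edges `E`; loops
are allowed, so that `E = id` can encode the complete graph. -/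
def IsBearingEquivalent (E : ι → Fin n × Fin n) (p p' : Fin n → EuclideanSpace ℝ (Fin d)) : Prop :=
  ∀ k, projL (p (E k).2 - p (E k).1) (p' (E k).2 - p' (E k).1) = 0

/-- Bearing congruence of `G(p)` and `G(p')`: parallelism over all pairs of vertices. -/
def IsBearingCongruent (p p' : Fin n → EuclideanSpace ℝ (Fin d)) : Prop :=
  ∀ i j : Fin n, i ≠ j → projL (p i - p j) (p' i - p' j) = 0

/-- Global bearing rigidity of `G(p)`. The competitor `p'` is allowed to have coincident points;
for injective `p` this changes nothing, as `p + t • p'` is injective for all small `t ≠ 0` and is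
bearing equivalent (congruent) to `p` exactly when `p'` is. -/
def IsGloballyBearingRigid (E : ι → Fin n × Fin n) (p : Fin n → EuclideanSpace ℝ (Fin d)) : Prop :=
  ∀ p', IsBearingEquivalent E p p' → IsBearingCongruent p p'

theorem isBearingEquivalent_id_iff_isBearingCongruent {p p' : Fin n → EuclideanSpace ℝ (Fin d)} :
    IsBearingEquivalent id p p' ↔ IsBearingCongruent p p' := by
  constructor
  · intro h i j _
    exact h (j, i)
  · rintro h ⟨i, j⟩
    obtain rfl | hij := eq_or_ne j i
    · simp
    · exact h j i hij

theorem bearingMap_apply (E : ι → Fin n × Fin n) (p q : Fin n → EuclideanSpace ℝ (Fin d)) (k : ι) :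
    bearingMap E p q k =
      ‖p (E k).2 - p (E k).1‖⁻¹ • projL (p (E k).2 - p (E k).1) (q (E k).2 - q (E k).1) :=
  rfl

theorem mem_ker_bearingMap_iff_isBearingEquivalent (E : ι → Fin n × Fin n)
    {p : Fin n → EuclideanSpace ℝ (Fin d)} (hp : Function.Injective p)
    {q : Fin n → EuclideanSpace ℝ (Fin d)} :
    q ∈ LinearMap.ker (bearingMap E p) ↔ IsBearingEquivalent E p q := by
  rw [LinearMap.mem_ker, funext_iff]
  refine forall_congr' fun k => ?_
  rw [bearingMap_apply, Pi.zero_apply]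
  obtain hloop | hedge := eq_or_ne (E k).2 (E k).1
  · simp [hloop]
  · have hweight : ‖p (E k).2 - p (E k).1‖⁻¹ ≠ 0 :=
      inv_ne_zero (norm_ne_zero_iff.mpr (sub_ne_zero.mpr (hp.ne hedge)))
    exact smul_eq_zero_iff_right hweight

theorem ker_bearingMap_le_ker_bearingMap_comp (E : κ → Fin n × Fin n) (f : ι → κ)
    (p : Fin n → EuclideanSpace ℝ (Fin d)) :
    LinearMap.ker (bearingMap E p) ≤ LinearMap.ker (bearingMap (E ∘ f) p) :=
  fun _ hq => funext fun k => congrFun hq (f k)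

theorem ker_bearingMap_id_le (E : ι → Fin n × Fin n) (p : Fin n → EuclideanSpace ℝ (Fin d)) :
    LinearMap.ker (bearingMap (id : Fin n × Fin n → Fin n × Fin n) p) ≤
      LinearMap.ker (bearingMap E p) :=
  ker_bearingMap_le_ker_bearingMap_comp id E p

theorem isGloballyBearingRigid_iff_ker_eq (E : ι → Fin n × Fin n)
    {p : Fin n → EuclideanSpace ℝ (Fin d)} (hp : Function.Injective p) :
    IsGloballyBearingRigid E p ↔
      LinearMap.ker (bearingMap (id : Fin n × Fin n → Fin n × Fin n) p) =
        LinearMap.ker (bearingMap E p) := by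
  calc IsGloballyBearingRigid E p
      ↔ LinearMap.ker (bearingMap E p) ≤ LinearMap.ker (bearingMap id p) := by
        simp only [IsGloballyBearingRigid, SetLike.le_def,
          mem_ker_bearingMap_iff_isBearingEquivalent _ hp,
          isBearingEquivalent_id_iff_isBearingCongruent]
    _ ↔ LinearMap.ker (bearingMap id p) = LinearMap.ker (bearingMap E p) :=
        (ker_bearingMap_id_le E p).ge_iff_eq

end Bearing

/-- A framework `G(p)` in `ℝ^d` (pairwise distinct points) is globally
bearing rigid iff `Null(R^κ(p)) = Null(R(p))`, or equivalently
`rank R^κ(p) = rank R(p)`. -/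
theorem globally_bearing_rigid_iff {d n m : ℕ} (hd : 2 ≤ d) (hn : 2 ≤ n)
    (E : Fin m → Fin n × Fin n) (hE : ∀ k, (E k).1 ≠ (E k).2)
    (p : Fin n → EuclideanSpace ℝ (Fin d))
    (hp : ∀ i j : Fin n, i ≠ j → p i ≠ p j) :
    ((∀ p' : Fin n → EuclideanSpace ℝ (Fin d),
        (∀ k, projL (p (E k).2 - p (E k).1) (p' (E k).2 - p' (E k).1) = 0) →
        ∀ i j : Fin n, i ≠ j → projL (p i - p j) (p' i - p' j) = 0) ↔
      LinearMap.ker (bearingMap (id : Fin n × Fin n → Fin n × Fin n) p) =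
        LinearMap.ker (bearingMap E p)) ∧
    (LinearMap.ker (bearingMap (id : Fin n × Fin n → Fin n × Fin n) p) =
        LinearMap.ker (bearingMap E p) ↔
      Module.finrank ℝ
          (LinearMap.range (bearingMap (id : Fin n × Fin n → Fin n × Fin n) p)) =
        Module.finrank ℝ (LinearMap.range (bearingMap E p))) :=
  ⟨isGloballyBearingRigid_iff_ker_eq E fun i j => not_imp_not.mp (hp i j),
    ker_eq_ker_iff_finrank_range_eq_of_le (ker_bearingMap_id_le E p)⟩
end

section
/- A framework G(p) in ℝ² is infinitesimally bearing rigid if and only if it is infinitesimally distance rigid. -/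
/-- The distance rigidity matrix `R_D(p) = diag(e_kᵀ)(H ⊗ I_d)`: its `k`-th row sends
`δ` to `⟪e_k, δ_{(E k).2} - δ_{(E k).1}⟫`. -/
noncomputable def distanceMap {d n : ℕ} {ι : Type*} (E : ι → Fin n × Fin n)
    (p : Fin n → EuclideanSpace ℝ (Fin d)) :
    (Fin n → EuclideanSpace ℝ (Fin d)) →ₗ[ℝ] (ι → ℝ) :=
  LinearMap.pi fun k =>
    (innerSL ℝ (p (E k).2 - p (E k).1)).toLinearMap ∘ₗ
      ((LinearMap.proj (R := ℝ) (φ := fun _ : Fin n => EuclideanSpace ℝ (Fin d)) (E k).2) -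
       (LinearMap.proj (R := ℝ) (φ := fun _ : Fin n => EuclideanSpace ℝ (Fin d)) (E k).1))

/-!
An infinitesimal motion `δ` is invisible to the bearings when every `δ_j - δ_i` is parallel to the
edge `p_j - p_i`, and invisible to the distances when every `δ_j - δ_i` is perpendicular to it.
In the plane a quarter turn exchanges the two conditions, so turning every velocity by a right
angle carries `ker R(p)` isomorphically onto `ker R_D(p)`, and the two ranks agree by rank-nullity.
-/

open Module
open scoped RealInnerProductSpace

section Kernels

variable {d n : ℕ} {ι : Type*} {E : ι → Fin n × Fin n} {p δ : Fin n → EuclideanSpace ℝ (Fin d)}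

lemma projL_eq_starProjection (x : EuclideanSpace ℝ (Fin d)) :
    projL x = ((ℝ ∙ x)ᗮ).starProjection.toLinearMap := by
  ext1 y
  simp [projL, Submodule.starProjection_orthogonal_val, Submodule.starProjection_singleton,
    smul_smul, div_eq_inv_mul]

lemma ker_projL (x : EuclideanSpace ℝ (Fin d)) : LinearMap.ker (projL x) = ℝ ∙ x := by
  rw [projL_eq_starProjection, Submodule.ker_starProjection, Submodule.orthogonal_orthogonal]

lemma mem_ker_bearingMap (hp : ∀ k, p (E k).1 ≠ p (E k).2) :
    δ ∈ LinearMap.ker (bearingMap E p) ↔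
      ∀ k, δ (E k).2 - δ (E k).1 ∈ ℝ ∙ (p (E k).2 - p (E k).1) := by
  simp [bearingMap, funext_iff, ← ker_projL, sub_eq_zero, (hp _).symm]

lemma mem_ker_distanceMap :
    δ ∈ LinearMap.ker (distanceMap E p) ↔
      ∀ k, ⟪p (E k).2 - p (E k).1, δ (E k).2 - δ (E k).1⟫ = 0 :=
  funext_iff

end Kernels

lemma mem_span_singleton_iff_inner_rightAngleRotation_eq_zero {V : Type*} [NormedAddCommGroup V]
    [InnerProductSpace ℝ V] [Fact (finrank ℝ V = 2)] (o : Orientation ℝ V (Fin 2))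
    {x : V} (hx : x ≠ 0) (y : V) :
    y ∈ ℝ ∙ x ↔ ⟪x, o.rightAngleRotation y⟫ = 0 := by
  simp_rw [o.inner_eq_zero_iff_eq_zero_or_eq_smul_rotation_pi_div_two, or_iff_right hx,
    o.rotation_pi_div_two, ← map_smul, EmbeddingLike.apply_eq_iff_eq,
    Submodule.mem_span_singleton]

section Plane

variable {n : ℕ} {ι : Type*} {E : ι → Fin n × Fin n} {p : Fin n → EuclideanSpace ℝ (Fin 2)}

instance fact_finrank_euclideanSpace_fin_two :
    Fact (finrank ℝ (EuclideanSpace ℝ (Fin 2)) = 2) :=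
  ⟨finrank_euclideanSpace_fin⟩

lemma ker_bearingMap_eq_comap_rightAngleRotation
    (o : Orientation ℝ (EuclideanSpace ℝ (Fin 2)) (Fin 2)) (hp : ∀ k, p (E k).1 ≠ p (E k).2) :
    LinearMap.ker (bearingMap E p) =
      (LinearMap.ker (distanceMap E p)).comap
        (LinearEquiv.piCongrRight fun _ => o.rightAngleRotation.toLinearEquiv).toLinearMap := by
  ext δ
  rw [Submodule.mem_comap, mem_ker_bearingMap hp, mem_ker_distanceMap]
  refine forall_congr' fun k => ?_
  have edge_ne_zero : p (E k).2 - p (E k).1 ≠ 0 := sub_ne_zero.mpr (hp k).symm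
  rw [mem_span_singleton_iff_inner_rightAngleRotation_eq_zero o edge_ne_zero, map_sub]
  rfl

theorem inf_bearing_rigid_iff_inf_distance_rigid_general (hp : ∀ k, p (E k).1 ≠ p (E k).2) :
    finrank ℝ (LinearMap.range (bearingMap E p)) =
      finrank ℝ (LinearMap.range (distanceMap E p)) := by
  let o := (EuclideanSpace.basisFun (Fin 2) ℝ).toBasis.orientation
  have finrank_ker : finrank ℝ (LinearMap.ker (bearingMap E p)) =
      finrank ℝ (LinearMap.ker (distanceMap E p)) := by
    rw [ker_bearingMap_eq_comap_rightAngleRotation o hp]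
    exact (LinearEquiv.ofSubmodule' _ _).finrank_eq
  have rank_nullity_bearing := (bearingMap E p).finrank_range_add_finrank_ker
  have rank_nullity_distance := (distanceMap E p).finrank_range_add_finrank_ker
  omega

end Plane

/-- A framework in ℝ² is infinitesimally bearing rigid
(`rank R(p) = 2n - 3`) iff it is infinitesimally distance rigid (`rank R_D(p) = 2n - 3`). -/
theorem inf_bearing_rigid_iff_inf_distance_rigid {n m : ℕ} (hn : 2 ≤ n)
    (E : Fin m → Fin n × Fin n) (p : Fin n → EuclideanSpace ℝ (Fin 2))
    (hp : ∀ k, p (E k).1 ≠ p (E k).2) :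
    Module.finrank ℝ (LinearMap.range (bearingMap E p)) = 2 * n - 3 ↔
      Module.finrank ℝ (LinearMap.range (distanceMap E p)) = 2 * n - 3 := by
  rw [inf_bearing_rigid_iff_inf_distance_rigid_general hp]
end

section
/- Let G(p) be a framework in ℝ². A vector δp = (δp_1^T, …, δp_n^T)^T ∈ ℝ^{2n} satisfies R(p)δp = 0 (i.e., δp is an infinitesimal bearing motion of G(p)) if and only if δp^⊥ := ((Q_{π/2}δp_1)^T, …, (Q_{π/2}δp_n)^T)^T satisfies R_D(p)δp^⊥ = 0 (i.e., δp^⊥ is an infinitesimal distance motion of G(p)), where Q_{π/2} is the rotation of ℝ² by π/2. -/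
/-- `Q_{π/2}`: counterclockwise rotation of ℝ² by `π/2`, `(x₀, x₁) ↦ (-x₁, x₀)`. -/
noncomputable def rotL : EuclideanSpace ℝ (Fin 2) →ₗ[ℝ] EuclideanSpace ℝ (Fin 2) :=
  Matrix.toEuclideanLin (!![0, -1; 1, 0] : Matrix (Fin 2) (Fin 2) ℝ)

/-!
The projection `P_e` has kernel `ℝ ∙ e`, so `R(p) δp = 0` says that along every edge the relative
velocity `δp_j - δp_i` is a multiple of `e`. In the plane `ℝ ∙ e` is the orthogonal complement of
the line spanned by `Q_{π/2} e`, and `Q_{π/2}` is skew-adjoint, so this is the same as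
`Q_{π/2} (δp_j - δp_i)` being orthogonal to `e`.
-/

open Module Submodule
open scoped RealInnerProductSpace

theorem orthogonal_span_singleton_eq_of_inner_eq_zero {𝕜 V : Type*} [RCLike 𝕜]
    [NormedAddCommGroup V] [InnerProductSpace 𝕜 V] [Fact (finrank 𝕜 V = 2)] {x u : V}
    (hx : x ≠ 0) (hu : u ≠ 0) (hux : inner 𝕜 u x = 0) : (𝕜 ∙ u)ᗮ = 𝕜 ∙ x := by
  have : FiniteDimensional 𝕜 V := .of_fact_finrank_eq_succ 1
  have hle : 𝕜 ∙ x ≤ (𝕜 ∙ u)ᗮ :=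
    (span_singleton_le_iff_mem _ _).2 (mem_orthogonal_singleton_iff_inner_right.2 hux)
  refine (eq_of_le_of_finrank_eq hle ?_).symm
  rw [finrank_span_singleton hx, finrank_orthogonal_span_singleton (n := 1) hu]

section Projection

variable {d : ℕ} (x y : EuclideanSpace ℝ (Fin d))

theorem projL_eq_starProjection_s12 : projL x y = (ℝ ∙ x)ᗮ.starProjection y := by
  simp [projL, starProjection_orthogonal_val, starProjection_singleton, smul_smul, div_eq_inv_mul]

theorem projL_eq_zero_iff_mem_span : projL x y = 0 ↔ y ∈ ℝ ∙ x := by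
  rw [projL_eq_starProjection_s12, starProjection_apply_eq_zero_iff, orthogonal_orthogonal]

end Projection

section Rotation

variable (x y : EuclideanSpace ℝ (Fin 2))

theorem inner_rotL_right_eq_neg : ⟪x, rotL y⟫ = -⟪rotL x, y⟫ := by
  simp [rotL, PiLp.inner_apply, Matrix.toLpLin_apply, dotProduct]

theorem inner_rotL_self : ⟪rotL x, x⟫ = 0 := by
  have hskew : ⟪rotL x, x⟫ = -⟪rotL x, x⟫ := by
    rw [← inner_rotL_right_eq_neg, real_inner_comm]
  exact self_eq_neg.1 hskew

theorem rotL_rotL : rotL (rotL x) = -x := by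
  ext i
  fin_cases i <;> simp [rotL, Matrix.toLpLin_apply, dotProduct]

variable {x}

theorem rotL_ne_zero (hx : x ≠ 0) : rotL x ≠ 0 := fun h =>
  hx <| neg_eq_zero.1 <| by rw [← rotL_rotL, h, map_zero]

theorem inner_rotL_right_eq_zero_iff_mem_span (hx : x ≠ 0) : ⟪x, rotL y⟫ = 0 ↔ y ∈ ℝ ∙ x := by
  have : Fact (finrank ℝ (EuclideanSpace ℝ (Fin 2)) = 2) := ⟨finrank_euclideanSpace_fin⟩
  rw [inner_rotL_right_eq_neg, neg_eq_zero, ← mem_orthogonal_singleton_iff_inner_right,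
    orthogonal_span_singleton_eq_of_inner_eq_zero hx (rotL_ne_zero hx) (inner_rotL_self x)]

end Rotation

section Framework

variable {n : ℕ} {ι : Type*} {E : ι → Fin n × Fin n} {k : ι}

theorem bearingMap_apply_eq_zero_iff {d : ℕ} {p : Fin n → EuclideanSpace ℝ (Fin d)}
    (hk : p (E k).1 ≠ p (E k).2) (δp : Fin n → EuclideanSpace ℝ (Fin d)) :
    bearingMap E p δp k = 0 ↔
      δp (E k).2 - δp (E k).1 ∈ ℝ ∙ (p (E k).2 - p (E k).1) := by
  have hnorm : ‖p (E k).2 - p (E k).1‖⁻¹ ≠ 0 :=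
    inv_ne_zero (norm_ne_zero_iff.2 (sub_ne_zero.2 hk.symm))
  rw [← projL_eq_zero_iff_mem_span]
  exact smul_eq_zero_iff_right hnorm

theorem distanceMap_rotL_apply_eq_zero_iff {p : Fin n → EuclideanSpace ℝ (Fin 2)}
    (hk : p (E k).1 ≠ p (E k).2) (δp : Fin n → EuclideanSpace ℝ (Fin 2)) :
    distanceMap E p (fun i => rotL (δp i)) k = 0 ↔
      δp (E k).2 - δp (E k).1 ∈ ℝ ∙ (p (E k).2 - p (E k).1) := by
  rw [← inner_rotL_right_eq_zero_iff_mem_span _ (sub_ne_zero.2 hk.symm), map_sub]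
  rfl

end Framework

theorem bearing_motion_iff_perp_distance_motion_general {n : ℕ} {ι : Type*}
    (E : ι → Fin n × Fin n) (p : Fin n → EuclideanSpace ℝ (Fin 2))
    (hp : ∀ k, p (E k).1 ≠ p (E k).2)
    (δp : Fin n → EuclideanSpace ℝ (Fin 2)) :
    bearingMap E p δp = 0 ↔ distanceMap E p (fun i => rotL (δp i)) = 0 := by
  rw [funext_iff, funext_iff]
  exact forall_congr' fun k =>
    (bearingMap_apply_eq_zero_iff (hp k) δp).trans
      (distanceMap_rotL_apply_eq_zero_iff (hp k) δp).symm

/-- For a framework in ℝ², `δp` is an infinitesimal bearing motion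
(`R(p) δp = 0`) iff `δp^⊥ := (Q_{π/2} δp_1, …, Q_{π/2} δp_n)` is an infinitesimal distance
motion (`R_D(p) δp^⊥ = 0`). -/
theorem bearing_motion_iff_perp_distance_motion {n m : ℕ} (hn : 2 ≤ n)
    (E : Fin m → Fin n × Fin n) (p : Fin n → EuclideanSpace ℝ (Fin 2))
    (hp : ∀ k, p (E k).1 ≠ p (E k).2)
    (δp : Fin n → EuclideanSpace ℝ (Fin 2)) :
    bearingMap E p δp = 0 ↔ distanceMap E p (fun i => rotL (δp i)) = 0 :=
  bearing_motion_iff_perp_distance_motion_general E p hp δp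
end

section
/- Let p : [0, T) → ℝ^{dn} be a differentiable solution of the bearing-only formation control law ṗ(t) = (H ⊗ I_d)^T diag(P_{g_1(t)}, …, P_{g_m(t)}) g*, where g_k(t) are the bearings of p(t) and p_i(t) ≠ p_j(t) for every edge and all t. Then the centroid p̄(t) := (1/n)Σ_{i=1}^n p_i(t) and the scale s(t) := sqrt((1/n)Σ_{i=1}^n ‖p_i(t) − p̄(t)‖²) are constant in t. -/
/-- The bearing-only control field `(H ⊗ I_d)ᵀ diag(P_{g_1}, …, P_{g_m}) g*` evaluated at a
configuration `q`: its `i`-th component is `∑_k [H]_{ki} P_{g_k} g*_k`, where `[H]_{ki} = 1`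
if `i` is the head `(E k).2` of edge `k`, `-1` if `i` is its tail `(E k).1`, and `0`
otherwise. -/
noncomputable def bearingCtrl {d n m : ℕ} (E : Fin m → Fin n × Fin n)
    (gs : Fin m → EuclideanSpace ℝ (Fin d)) (q : Fin n → EuclideanSpace ℝ (Fin d)) :
    Fin n → EuclideanSpace ℝ (Fin d) :=
  fun i => ∑ k, ((if (E k).2 = i then (1 : ℝ) else 0) - if (E k).1 = i then (1 : ℝ) else 0) •
    projL (q (E k).2 - q (E k).1) (gs k)

/-!
The velocities are `(H ⊗ I)ᵀ f`, where `f` assigns to each edge the vector `P_{gₖ} gₖ*`. Rows of `H`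
sum to zero, so the velocities do too and the centroid rests. Since `H ⊗ I` sends positions to edge
vectors, `∑ᵢ ⟪pᵢ, ṗᵢ⟫ = ∑ₖ ⟪eₖ, P_{gₖ} gₖ*⟫ = 0`: each `P_{gₖ}` projects onto the orthogonal
complement of `eₖ`. Hence the sum of squared distances to the resting centroid is constant.
-/

open scoped InnerProductSpace

section Incidence

variable {V K F : Type*} [DecidableEq V]

/-- The incidence matrix `H` of the oriented edges `E k = (tail, head)`: `1` at the head, `-1` at
the tail, so that a loop has a zero row. -/
def incidence (E : K → V × V) : Matrix K V ℝ :=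
  fun k i => (if (E k).2 = i then 1 else 0) - if (E k).1 = i then 1 else 0

/-- The velocity field `(H ⊗ I)ᵀ f` that the edge vectors `f` induce on the vertices. -/
def edgeVelocity [Fintype K] [AddCommGroup F] [Module ℝ F] (E : K → V × V) (f : K → F) : V → F :=
  fun i => ∑ k, incidence E k i • f k

theorem sum_incidence [Fintype V] (E : K → V × V) (k : K) : ∑ i, incidence E k i = 0 := by
  simp [incidence]

theorem sum_incidence_smul [Fintype V] [AddCommGroup F] [Module ℝ F] (E : K → V × V) (k : K)
    (q : V → F) : ∑ i, incidence E k i • q i = q (E k).2 - q (E k).1 := by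
  simp [incidence, sub_smul, Finset.sum_sub_distrib]

theorem sum_edgeVelocity [Fintype V] [Fintype K] [AddCommGroup F] [Module ℝ F]
    (E : K → V × V) (f : K → F) : ∑ i, edgeVelocity E f i = 0 := by
  simp only [edgeVelocity]
  rw [Finset.sum_comm]
  simp only [← Finset.sum_smul, sum_incidence, zero_smul, Finset.sum_const_zero]

theorem sum_inner_edgeVelocity [Fintype V] [Fintype K] [NormedAddCommGroup F]
    [InnerProductSpace ℝ F] (E : K → V × V) (q : V → F) (f : K → F) :
    ∑ i, ⟪q i, edgeVelocity E f i⟫_ℝ = ∑ k, ⟪q (E k).2 - q (E k).1, f k⟫_ℝ := by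
  calc ∑ i, ⟪q i, edgeVelocity E f i⟫_ℝ
      = ∑ i, ∑ k, ⟪incidence E k i • q i, f k⟫_ℝ := by
        simp only [edgeVelocity, inner_sum, real_inner_smul_left, real_inner_smul_right]
    _ = ∑ k, ⟪∑ i, incidence E k i • q i, f k⟫_ℝ := by
        rw [Finset.sum_comm]
        simp only [sum_inner]
    _ = ∑ k, ⟪q (E k).2 - q (E k).1, f k⟫_ℝ := by
        simp only [sum_incidence_smul]

end Incidence

theorem inner_projL_self {d : ℕ} (x y : EuclideanSpace ℝ (Fin d)) : ⟪x, projL x y⟫_ℝ = 0 := by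
  obtain rfl | hx := eq_or_ne x 0
  · exact inner_zero_left _
  have projL_apply : projL x y = y - (‖x‖ ^ 2)⁻¹ • ⟪x, y⟫_ℝ • x := rfl
  have norm_sq_ne : ‖x‖ ^ 2 ≠ 0 := pow_ne_zero 2 (norm_ne_zero_iff.2 hx)
  rw [projL_apply, inner_sub_right, real_inner_smul_right, real_inner_smul_right,
    real_inner_self_eq_norm_sq, mul_comm ⟪x, y⟫_ℝ, inv_mul_cancel_left₀ norm_sq_ne, sub_self]

theorem eq_of_hasDerivWithinAt_zero {𝕜 F : Type*} [RCLike 𝕜] [NormedAddCommGroup F]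
    [NormedSpace 𝕜 F] {s : Set 𝕜} (hs : Convex ℝ s) {f : 𝕜 → F}
    (hf : ∀ t ∈ s, HasDerivWithinAt f 0 s t) {a b : 𝕜} (ha : a ∈ s) (hb : b ∈ s) : f b = f a := by
  have norm_sub_le : ‖f b - f a‖ ≤ 0 * ‖b - a‖ :=
    hs.norm_image_sub_le_of_norm_hasDerivWithin_le hf (fun _ _ => norm_zero.le) ha hb
  rwa [zero_mul, norm_le_zero_iff, sub_eq_zero] at norm_sub_le

section Configuration

variable {V F : Type*} [Fintype V]

/-- The centroid `(1/n) ∑ᵢ qᵢ` of a configuration, with junk value `0` when there are no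
vertices. -/
noncomputable def centroid [AddCommGroup F] [Module ℝ F] (q : V → F) : F :=
  (Fintype.card V : ℝ)⁻¹ • ∑ i, q i

/-- The scale of a configuration: the root mean square distance of its points to their centroid,
with junk value `0` when there are no vertices. -/
noncomputable def scale [NormedAddCommGroup F] [NormedSpace ℝ F] (q : V → F) : ℝ :=
  √((Fintype.card V : ℝ)⁻¹ * ∑ i, ‖q i - centroid q‖ ^ 2)

variable [NormedAddCommGroup F] {s : Set ℝ} {p v : ℝ → V → F} {a b : ℝ}

theorem centroid_eq_of_sum_velocity_eq_zero [NormedSpace ℝ F] (hs : Convex ℝ s)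
    (hp : ∀ t ∈ s, HasDerivWithinAt p (v t) s t) (hv : ∀ t ∈ s, ∑ i, v t i = 0)
    (ha : a ∈ s) (hb : b ∈ s) : centroid (p b) = centroid (p a) := by
  refine eq_of_hasDerivWithinAt_zero (f := fun t => centroid (p t)) hs (fun t ht => ?_) ha hb
  have hsum : HasDerivWithinAt (fun t => ∑ i, p t i) (∑ i, v t i) s t :=
    .fun_sum fun i _ => hasDerivWithinAt_pi.1 (hp t ht) i
  have hcentroid : HasDerivWithinAt (fun t => centroid (p t)) (centroid (v t)) s t :=
    hsum.const_smul (Fintype.card V : ℝ)⁻¹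
  rwa [centroid, hv t ht, smul_zero] at hcentroid

theorem sum_norm_sub_sq_eq_of_sum_inner_velocity_eq_zero [InnerProductSpace ℝ F]
    (hs : Convex ℝ s) (hp : ∀ t ∈ s, HasDerivWithinAt p (v t) s t) (c : F)
    (hv : ∀ t ∈ s, ∑ i, ⟪p t i - c, v t i⟫_ℝ = 0) (ha : a ∈ s) (hb : b ∈ s) :
    ∑ i, ‖p b i - c‖ ^ 2 = ∑ i, ‖p a i - c‖ ^ 2 := by
  refine eq_of_hasDerivWithinAt_zero (f := fun t => ∑ i, ‖p t i - c‖ ^ 2) hs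
    (fun t ht => ?_) ha hb
  have hsum : HasDerivWithinAt (fun t => ∑ i, ‖p t i - c‖ ^ 2)
      (∑ i, 2 * ⟪p t i - c, v t i⟫_ℝ) s t :=
    .fun_sum fun i _ => ((hasDerivWithinAt_pi.1 (hp t ht) i).sub_const c).norm_sq
  rwa [← Finset.mul_sum, hv t ht, mul_zero] at hsum

theorem scale_eq_of_sum_inner_velocity_eq_zero [InnerProductSpace ℝ F] (hs : Convex ℝ s)
    (hp : ∀ t ∈ s, HasDerivWithinAt p (v t) s t) (hv : ∀ t ∈ s, ∑ i, v t i = 0)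
    (hpv : ∀ t ∈ s, ∑ i, ⟪p t i, v t i⟫_ℝ = 0) (ha : a ∈ s) (hb : b ∈ s) :
    scale (p b) = scale (p a) := by
  have hpv_sub : ∀ t ∈ s, ∑ i, ⟪p t i - centroid (p a), v t i⟫_ℝ = 0 := fun t ht => by
    simp only [inner_sub_left, Finset.sum_sub_distrib, ← inner_sum, hpv t ht, hv t ht,
      inner_zero_right, sub_zero]
  rw [scale, scale, centroid_eq_of_sum_velocity_eq_zero hs hp hv ha hb,
    sum_norm_sub_sq_eq_of_sum_inner_velocity_eq_zero hs hp _ hpv_sub ha hb]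

end Configuration

theorem centroid_and_scale_invariant_general {V K F : Type*} [Fintype V] [DecidableEq V]
    [Fintype K] [NormedAddCommGroup F] [InnerProductSpace ℝ F] (E : K → V × V) {s : Set ℝ}
    (hs : Convex ℝ s) {p : ℝ → V → F} {f : ℝ → K → F}
    (hderiv : ∀ t ∈ s, HasDerivWithinAt p (edgeVelocity E (f t)) s t)
    (horth : ∀ t ∈ s, ∀ k, ⟪p t (E k).2 - p t (E k).1, f t k⟫_ℝ = 0)
    {a b : ℝ} (ha : a ∈ s) (hb : b ∈ s) :
    centroid (p b) = centroid (p a) ∧ scale (p b) = scale (p a) := by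
  have hsum : ∀ t ∈ s, ∑ i, edgeVelocity E (f t) i = 0 := fun t _ => sum_edgeVelocity E (f t)
  have hpower : ∀ t ∈ s, ∑ i, ⟪p t i, edgeVelocity E (f t) i⟫_ℝ = 0 := fun t ht => by
    rw [sum_inner_edgeVelocity]
    exact Finset.sum_eq_zero fun k _ => horth t ht k
  exact ⟨centroid_eq_of_sum_velocity_eq_zero hs hderiv hsum ha hb,
    scale_eq_of_sum_inner_velocity_eq_zero hs hderiv hsum hpower ha hb⟩

/-- Along any differentiable solution of
`ṗ = (H ⊗ I_d)ᵀ diag(P_{g_k(t)}) g*` on `[0, T)` with `p_i(t) ≠ p_j(t)` on every edge, the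
centroid `p̄(t)` and the scale `s(t)` are constant in `t`. -/
theorem centroid_and_scale_invariant {d n m : ℕ} (hd : 2 ≤ d) (hn : 2 ≤ n)
    (E : Fin m → Fin n × Fin n) (gs : Fin m → EuclideanSpace ℝ (Fin d))
    (T : ℝ) (hT : 0 < T) (p : ℝ → Fin n → EuclideanSpace ℝ (Fin d))
    (hderiv : ∀ t ∈ Set.Ico (0 : ℝ) T,
      HasDerivWithinAt p (bearingCtrl E gs (p t)) (Set.Ico 0 T) t)
    (hne : ∀ t ∈ Set.Ico (0 : ℝ) T, ∀ k, p t (E k).1 ≠ p t (E k).2) :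
    ∀ t ∈ Set.Ico (0 : ℝ) T,
      ((n : ℝ)⁻¹ • ∑ i, p t i) = ((n : ℝ)⁻¹ • ∑ i, p 0 i) ∧
      Real.sqrt ((n : ℝ)⁻¹ * ∑ i, ‖p t i - (n : ℝ)⁻¹ • ∑ l, p t l‖ ^ 2) =
        Real.sqrt ((n : ℝ)⁻¹ * ∑ i, ‖p 0 i - (n : ℝ)⁻¹ • ∑ l, p 0 l‖ ^ 2) := by
  intro t ht
  simpa only [centroid, scale, Fintype.card_fin] using
    centroid_and_scale_invariant_general E (convex_Ico 0 T) hderiv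
      (fun _ _ _ => inner_projL_self _ _) ⟨le_rfl, hT⟩ ht
end

section
/- Let G(p*) be an infinitesimally bearing rigid target formation in ℝ^d with bearing constraints g* = (g_1*,…,g_m*), centroid p̄* and scale s*. Let p : [0, ∞) → ℝ^{dn} be a differentiable solution of ṗ(t) = (H ⊗ I_d)^T diag(P_{g_1(t)}, …, P_{g_m(t)}) g* with p_i(t) ≠ p_j(t) for every edge and all t ≥ 0, whose initial condition satisfies p̄(0) = p̄*, s(0) = s*, and p(0) ≠ −p* + 2(1_n ⊗ p̄*). Then p(t) converges to p* exponentially fast: there exist constants C ≥ 0 and λ > 0 (depending on the initial condition) such that ‖p(t) − p*‖ ≤ C e^{−λ t} for all t ≥ 0; in particular g_k(t) → g_k* for all k as t → ∞. -/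
/-- The linear map `w ↦ 1_n ⊗ w` stacking `n` copies of `w ∈ ℝ^d`; its range is
`span{1_n ⊗ I_d}`, the space of translational motions. -/
noncomputable def constLM (d n : ℕ) :
    EuclideanSpace ℝ (Fin d) →ₗ[ℝ] (Fin n → EuclideanSpace ℝ (Fin d)) :=
  LinearMap.pi fun _ => LinearMap.id

/-!
Move the common centroid to the origin and write `q(t)` for the trajectory, `r` for the target and
`u` for the control field. The field is orthogonal to all translations and to `q`, so the centroid
and `‖q‖` are conserved: `q` runs on the sphere of radius `‖r‖`, orthogonally to the translations,
and `d/dt ‖q - r‖² = -2⟪r, u⟫`.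

For vectors `e`, `f` the product `‖f‖² ‖P_f e‖²` is the Gram determinant of `e` and `f`, hence
symmetric. Applied to the edges `e` of `r` and `f` of `q`, this bounds `‖R(r) q‖²` by a constant
times the dissipation `⟪r, u⟫`. Rigidity makes `R(r)` coercive on the orthogonal complement of the
translations and `r`, so the dissipation dominates the squared distance of `q` to the line `ℝ r`.

On the sphere that squared distance is `‖q - r‖² ‖q + r‖² / (4 ‖r‖²)`. As `‖q - r‖` decreases,
`‖q + r‖` increases, and it is positive at time `0` because `q(0) ≠ -r`. Hence the dissipation
is at least a positive multiple of `‖q - r‖²`, and Grönwall's inequality gives the decay.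
-/

open Filter Set Topology
open scoped InnerProductSpace

namespace BearingFormation

section OrthogonalProjection

variable {V : Type*} [NormedAddCommGroup V] [InnerProductSpace ℝ V]

lemma inner_starProjection_self (K : Submodule ℝ V) [K.HasOrthogonalProjection] (v : V) :
    ⟪v, K.starProjection v⟫_ℝ = ‖K.starProjection v‖ ^ 2 := by
  rw [real_inner_comm]
  exact K.re_inner_starProjection_eq_normSq v

lemma norm_sq_mul_norm_sq_starProjection_orthogonal_singleton (x y : V) :
    ‖x‖ ^ 2 * ‖(ℝ ∙ x)ᗮ.starProjection y‖ ^ 2 = ‖x‖ ^ 2 * ‖y‖ ^ 2 - ⟪x, y⟫_ℝ ^ 2 := by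
  rcases eq_or_ne x 0 with rfl | hx
  · simp
  have pythagoras := (ℝ ∙ x).norm_sq_eq_add_norm_sq_starProjection y
  have norm_along : ‖(ℝ ∙ x).starProjection y‖ ^ 2 = ⟪x, y⟫_ℝ ^ 2 / ‖x‖ ^ 2 := by
    rw [Submodule.starProjection_singleton, norm_smul, mul_pow]
    simp only [Real.ringHom_apply, norm_div, Real.norm_eq_abs, norm_pow, div_pow, sq_abs]
    field_simp
  rw [pythagoras, norm_along]
  field_simp
  ring

lemma norm_sq_mul_norm_sq_starProjection_orthogonal_singleton_comm (x y : V) :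
    ‖x‖ ^ 2 * ‖(ℝ ∙ x)ᗮ.starProjection y‖ ^ 2 = ‖y‖ ^ 2 * ‖(ℝ ∙ y)ᗮ.starProjection x‖ ^ 2 := by
  rw [norm_sq_mul_norm_sq_starProjection_orthogonal_singleton,
    norm_sq_mul_norm_sq_starProjection_orthogonal_singleton, real_inner_comm, mul_comm (‖x‖ ^ 2)]

lemma norm_sub_sq_mul_norm_add_sq_of_norm_eq {x r : V} (h : ‖x‖ = ‖r‖) :
    ‖x - r‖ ^ 2 * ‖x + r‖ ^ 2 = 4 * (‖r‖ ^ 2 * ‖(ℝ ∙ r)ᗮ.starProjection x‖ ^ 2) := by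
  rw [norm_sq_mul_norm_sq_starProjection_orthogonal_singleton, norm_sub_sq_real, norm_add_sq_real,
    real_inner_comm, h]
  ring

end OrthogonalProjection

section Coercivity

variable {𝕜 V W : Type*} [RCLike 𝕜] [NormedAddCommGroup V] [InnerProductSpace 𝕜 V]
  [FiniteDimensional 𝕜 V] [NormedAddCommGroup W] [NormedSpace 𝕜 W]

lemma exists_norm_le_of_mem_orthogonal_ker (L : V →ₗ[𝕜] W) :
    ∃ K > 0, ∀ x ∈ (LinearMap.ker L)ᗮ, ‖x‖ ≤ K * ‖L x‖ := by
  have injective : LinearMap.ker (L.domRestrict (LinearMap.ker L)ᗮ) = ⊥ :=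
    LinearMap.ker_eq_bot.mpr <| LinearMap.injective_domRestrict_iff.mpr
      (LinearMap.ker L).orthogonal_disjoint.symm
  obtain ⟨K, hK, hL⟩ := LinearMap.exists_antilipschitzWith _ injective
  exact ⟨K, hK, fun x hx => by simpa using hL.le_mul_dist ⟨x, hx⟩ 0⟩

lemma exists_norm_starProjection_le_of_ker_eq_sup_span {L : V →ₗ[𝕜] W} {N : Submodule 𝕜 V} {r : V}
    (hr : r ∈ Nᗮ) (hL : LinearMap.ker L = N ⊔ 𝕜 ∙ r) :
    ∃ K > 0, ∀ x ∈ Nᗮ, ‖(𝕜 ∙ r)ᗮ.starProjection x‖ ≤ K * ‖L x‖ := by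
  obtain ⟨K, hK, hcoercive⟩ := exists_norm_le_of_mem_orthogonal_ker L
  refine ⟨K, hK, fun x hx => ?_⟩
  have along_mem : (𝕜 ∙ r).starProjection x ∈ 𝕜 ∙ r := Submodule.starProjection_apply_mem _ x
  have along_mem_ker : (𝕜 ∙ r).starProjection x ∈ LinearMap.ker L :=
    hL ▸ Submodule.mem_sup_right along_mem
  have residual_mem : (𝕜 ∙ r)ᗮ.starProjection x ∈ (LinearMap.ker L)ᗮ := by
    rw [hL, ← Submodule.inf_orthogonal]
    refine ⟨?_, Submodule.starProjection_apply_mem _ x⟩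
    rw [Submodule.starProjection_orthogonal_val]
    exact sub_mem hx ((Submodule.span_singleton_le_iff_mem _ _).mpr hr along_mem)
  have map_residual : L ((𝕜 ∙ r)ᗮ.starProjection x) = L x := by
    rw [Submodule.starProjection_orthogonal_val, map_sub, LinearMap.mem_ker.mp along_mem_ker,
      sub_zero]
  simpa only [map_residual] using hcoercive _ residual_mem

end Coercivity

lemma sup_span_singleton_sub {R M : Type*} [Ring R] [AddCommGroup M] [Module R M]
    {N : Submodule R M} {c : M} (hc : c ∈ N) (a : M) :
    N ⊔ Submodule.span R {a - c} = N ⊔ Submodule.span R {a} := by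
  have sup_le_of_sub_mem : ∀ {u v : M}, u - v ∈ N → N ⊔ R ∙ u ≤ N ⊔ R ∙ v := fun {u v} h => by
    refine sup_le le_sup_left ((Submodule.span_singleton_le_iff_mem _ _).mpr ?_)
    rw [← sub_add_cancel u v]
    exact add_mem (Submodule.mem_sup_left h)
      (Submodule.mem_sup_right (Submodule.mem_span_singleton_self v))
  exact le_antisymm (sup_le_of_sub_mem (by simpa using hc)) (sup_le_of_sub_mem (by simpa using hc))

lemma pi_norm_sq_le {ι F : Type*} [Fintype ι] [SeminormedAddCommGroup F] {f : ι → F} {c : ℝ}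
    (hc : 0 ≤ c) (hf : ∀ k, ‖f k‖ ^ 2 ≤ c) : ‖f‖ ^ 2 ≤ c :=
  (Real.le_sqrt (norm_nonneg f) hc).mp <|
    (pi_norm_le_iff_of_nonneg (Real.sqrt_nonneg c)).mpr fun k => Real.le_sqrt_of_sq_le (hf k)

section Decay

lemma le_mul_exp_of_hasDerivWithinAt_le {f f' : ℝ → ℝ} {κ : ℝ}
    (hf : ∀ t ∈ Ici (0 : ℝ), HasDerivWithinAt f (f' t) (Ici 0) t)
    (hle : ∀ t ∈ Ici (0 : ℝ), f' t ≤ κ * f t) {t : ℝ} (ht : 0 ≤ t) :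
    f t ≤ f 0 * Real.exp (κ * t) := by
  have gronwall := le_gronwallBound_of_liminf_deriv_right_le (δ := f 0) (K := κ) (ε := 0)
    (fun s hs => (hf s hs.1).continuousWithinAt.mono Icc_subset_Ici_self)
    (fun s hs _ hr => ((hf s hs.1).mono (Ici_subset_Ici.mpr hs.1)).liminf_right_slope_le hr)
    le_rfl (fun s hs => by simpa using hle s hs.1) t ⟨ht, le_rfl⟩
  simpa [gronwallBound_ε0] using gronwall

lemma eq_of_hasDerivWithinAt_zero {F : Type*} [NormedAddCommGroup F] [NormedSpace ℝ F] {f : ℝ → F}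
    (hf : ∀ t ∈ Ici (0 : ℝ), HasDerivWithinAt f 0 (Ici 0) t) {t : ℝ} (ht : 0 ≤ t) : f t = f 0 :=
  constant_of_has_deriv_right_zero
    (fun s hs => (hf s hs.1).continuousWithinAt.mono Icc_subset_Ici_self)
    (fun s hs => (hf s hs.1).mono (Ici_subset_Ici.mpr hs.1)) t ⟨ht, le_rfl⟩

lemma tendsto_of_norm_sub_le_mul_exp {F : Type*} [SeminormedAddCommGroup F] {f : ℝ → F} {a : F}
    {C lam : ℝ} (hlam : 0 < lam) (hf : ∀ t ≥ 0, ‖f t - a‖ ≤ C * Real.exp (-lam * t)) :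
    Tendsto f atTop (𝓝 a) := by
  have exp_tendsto : Tendsto (fun t => C * Real.exp (-lam * t)) atTop (𝓝 0) := by
    simpa using (Real.tendsto_exp_atBot.comp
      (tendsto_id.const_mul_atTop_of_neg (neg_lt_zero.mpr hlam))).const_mul C
  exact tendsto_iff_norm_sub_tendsto_zero.mpr <|
    squeeze_zero' (.of_forall fun _ => norm_nonneg _) ((eventually_ge_atTop 0).mono hf) exp_tendsto

variable {V : Type*} [NormedAddCommGroup V] [InnerProductSpace ℝ V] {x v : ℝ → V}

lemma mem_orthogonal_of_hasDerivWithinAt {N : Submodule ℝ V}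
    (hx : ∀ t ∈ Ici (0 : ℝ), HasDerivWithinAt x (v t) (Ici 0) t)
    (hv : ∀ t ∈ Ici (0 : ℝ), v t ∈ Nᗮ) (h0 : x 0 ∈ Nᗮ) {t : ℝ} (ht : 0 ≤ t) : x t ∈ Nᗮ := by
  intro w hw
  have inner_deriv_zero : ∀ s ∈ Ici (0 : ℝ),
      HasDerivWithinAt (fun s => ⟪w, x s⟫_ℝ) 0 (Ici 0) s := fun s hs => by
    simpa [hv s hs w hw] using (hasDerivWithinAt_const s (Ici 0) w).inner ℝ (hx s hs)
  rw [eq_of_hasDerivWithinAt_zero inner_deriv_zero ht, h0 w hw]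

lemma norm_eq_of_hasDerivWithinAt_of_inner_eq_zero
    (hx : ∀ t ∈ Ici (0 : ℝ), HasDerivWithinAt x (v t) (Ici 0) t)
    (hv : ∀ t ∈ Ici (0 : ℝ), ⟪x t, v t⟫_ℝ = 0) {t : ℝ} (ht : 0 ≤ t) : ‖x t‖ = ‖x 0‖ := by
  have norm_sq_deriv_zero : ∀ s ∈ Ici (0 : ℝ),
      HasDerivWithinAt (fun s => ‖x s‖ ^ 2) 0 (Ici 0) s := fun s hs => by
    simpa [hv s hs] using (hx s hs).norm_sq
  exact (pow_left_inj₀ (norm_nonneg _) (norm_nonneg _) two_ne_zero).mp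
    (eq_of_hasDerivWithinAt_zero norm_sq_deriv_zero ht)

lemma hasDerivWithinAt_norm_sub_sq {r : V}
    (hx : ∀ t ∈ Ici (0 : ℝ), HasDerivWithinAt x (v t) (Ici 0) t)
    (htangent : ∀ t ∈ Ici (0 : ℝ), ⟪x t, v t⟫_ℝ = 0) {t : ℝ} (ht : 0 ≤ t) :
    HasDerivWithinAt (fun s => ‖x s - r‖ ^ 2) (-2 * ⟪r, v t⟫_ℝ) (Ici 0) t := by
  simpa [inner_sub_left, htangent t ht] using ((hx t ht).sub_const r).norm_sq

-- As `x` stays on the sphere through `r`, approaching `r` means receding from the antipode `-r`.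
lemma norm_add_sq_le_of_inner_nonneg {r : V}
    (hx : ∀ t ∈ Ici (0 : ℝ), HasDerivWithinAt x (v t) (Ici 0) t)
    (htangent : ∀ t ∈ Ici (0 : ℝ), ⟪x t, v t⟫_ℝ = 0) (hv : ∀ t ∈ Ici (0 : ℝ), 0 ≤ ⟪r, v t⟫_ℝ)
    {t : ℝ} (ht : 0 ≤ t) : ‖x 0 + r‖ ^ 2 ≤ ‖x t + r‖ ^ 2 := by
  have dist_le : ‖x t - r‖ ^ 2 ≤ ‖x 0 - r‖ ^ 2 := by
    simpa using le_mul_exp_of_hasDerivWithinAt_le (κ := 0)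
      (fun s hs => hasDerivWithinAt_norm_sub_sq hx htangent hs)
      (fun s hs => by linarith [hv s hs]) ht
  have norm_eq := norm_eq_of_hasDerivWithinAt_of_inner_eq_zero hx htangent ht
  have parallelogram_zero := parallelogram_law_with_norm ℝ (x 0) r
  have parallelogram := parallelogram_law_with_norm ℝ (x t) r
  rw [norm_eq] at parallelogram
  linarith

theorem norm_sub_le_mul_exp_of_norm_sq_starProjection_le {r : V} {μ : ℝ} (hr : r ≠ 0) (hμ : 0 ≤ μ)
    (hx : ∀ t ∈ Ici (0 : ℝ), HasDerivWithinAt x (v t) (Ici 0) t)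
    (htangent : ∀ t ∈ Ici (0 : ℝ), ⟪x t, v t⟫_ℝ = 0) (hnorm : ‖x 0‖ = ‖r‖)
    (hv : ∀ t ∈ Ici (0 : ℝ), μ * ‖(ℝ ∙ r)ᗮ.starProjection (x t)‖ ^ 2 ≤ ⟪r, v t⟫_ℝ)
    {t : ℝ} (ht : 0 ≤ t) :
    ‖x t - r‖ ≤ ‖x 0 - r‖ * Real.exp (-(μ * ‖x 0 + r‖ ^ 2 / (4 * ‖r‖ ^ 2)) * t) := by
  set lam := μ * ‖x 0 + r‖ ^ 2 / (4 * ‖r‖ ^ 2) with lam_def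
  have inner_nonneg : ∀ s ∈ Ici (0 : ℝ), 0 ≤ ⟪r, v s⟫_ℝ := fun s hs =>
    le_trans (by positivity) (hv s hs)
  have dist_sq_deriv_le : ∀ s ∈ Ici (0 : ℝ), -2 * ⟪r, v s⟫_ℝ ≤ -(2 * lam) * ‖x s - r‖ ^ 2 :=
      fun s hs => by
    have norm_eq := (norm_eq_of_hasDerivWithinAt_of_inner_eq_zero hx htangent hs).trans hnorm
    have lam_mul_le : lam * ‖x s - r‖ ^ 2 ≤ ⟪r, v s⟫_ℝ := calc
      lam * ‖x s - r‖ ^ 2 = μ / (4 * ‖r‖ ^ 2) * (‖x s - r‖ ^ 2 * ‖x 0 + r‖ ^ 2) := by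
        rw [lam_def]; ring
      _ ≤ μ / (4 * ‖r‖ ^ 2) * (‖x s - r‖ ^ 2 * ‖x s + r‖ ^ 2) := by
        gcongr μ / (4 * ‖r‖ ^ 2) * (‖x s - r‖ ^ 2 * ?_)
        exact norm_add_sq_le_of_inner_nonneg hx htangent inner_nonneg hs
      _ = μ * ‖(ℝ ∙ r)ᗮ.starProjection (x s)‖ ^ 2 := by
        rw [norm_sub_sq_mul_norm_add_sq_of_norm_eq norm_eq]; field_simp
      _ ≤ ⟪r, v s⟫_ℝ := hv s hs
    linarith
  have dist_sq_le := le_mul_exp_of_hasDerivWithinAt_le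
    (fun s hs => hasDerivWithinAt_norm_sub_sq hx htangent hs) dist_sq_deriv_le ht
  refine (sq_le_sq₀ (norm_nonneg _) (by positivity)).mp (dist_sq_le.trans_eq ?_)
  rw [mul_pow, ← Real.exp_nat_mul]
  congr 2
  push_cast
  ring

end Decay

section Formation

variable {d n m : ℕ} {ι : Type*}

/-- The space `ℝ^{dn}` of configurations of `n` agents in `ℝ^d`, with the Euclidean norm; the plain
function type of the statement carries the supremum norm. -/
abbrev Configuration (d n : ℕ) : Type :=
  PiLp 2 fun _ : Fin n => EuclideanSpace ℝ (Fin d)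

-- Without this shortcut, instance search times out unifying the nested `PiLp` structures.
instance : ContinuousSMul ℝ (Configuration d n) :=
  IsBoundedSMul.continuousSMul

/-- The edge vectors `e_k = q_j - q_i` of a configuration. -/
def edgeVector (E : ι → Fin n × Fin n) (q : Configuration d n) (k : ι) :
    EuclideanSpace ℝ (Fin d) :=
  q (E k).2 - q (E k).1

/-- The bearings `g_k = e_k / ‖e_k‖` of a configuration, with value `0` on an edge whose endpoints
coincide. -/
noncomputable def bearing (E : ι → Fin n × Fin n) (q : Configuration d n) (k : ι) :
    EuclideanSpace ℝ (Fin d) :=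
  ‖edgeVector E q k‖⁻¹ • edgeVector E q k

/-- The control field `bearingCtrl` as a vector field on the Euclidean space of configurations. -/
noncomputable def bearingField (E : Fin m → Fin n × Fin n) (g : Fin m → EuclideanSpace ℝ (Fin d))
    (q : Configuration d n) : Configuration d n :=
  WithLp.toLp 2 (bearingCtrl E g q.ofLp)

/-- The bearing rigidity matrix `bearingMap` on the Euclidean space of configurations. -/
noncomputable def rigidityMap (E : ι → Fin n × Fin n) (r : Configuration d n) :
    Configuration d n →ₗ[ℝ] ι → EuclideanSpace ℝ (Fin d) :=
  bearingMap E r.ofLp ∘ₗ (WithLp.linearEquiv 2 ℝ _).toLinearMap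

/-- The translational motions `1_n ⊗ w`. -/
noncomputable def translations (d n : ℕ) : Submodule ℝ (Configuration d n) :=
  (LinearMap.range (constLM d n)).map (WithLp.linearEquiv 2 ℝ _).symm.toLinearMap

/-- The configuration `1_n ⊗ q̄` in which every agent sits at the centroid of `q`. -/
noncomputable def centroid (q : Configuration d n) : Configuration d n :=
  WithLp.toLp 2 fun _ => (n : ℝ)⁻¹ • ∑ i, q i

/-- Infinitesimal bearing rigidity: the only bearing-preserving infinitesimal motions are
translations and scalings. -/
def InfinitesimallyBearingRigid (E : ι → Fin n × Fin n) (r : Configuration d n) : Prop :=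
  LinearMap.ker (rigidityMap E r) = translations d n ⊔ ℝ ∙ r

lemma projL_apply_eq_starProjection (x y : EuclideanSpace ℝ (Fin d)) :
    projL x y = (ℝ ∙ x)ᗮ.starProjection y := by
  rw [Submodule.starProjection_orthogonal_val, Submodule.starProjection_singleton]
  simp [projL, smul_smul, div_eq_inv_mul]

lemma rigidityMap_apply (E : ι → Fin n × Fin n) (r q : Configuration d n) (k : ι) :
    rigidityMap E r q k =
      ‖edgeVector E r k‖⁻¹ • projL (edgeVector E r k) (edgeVector E q k) := by
  simp [rigidityMap, bearingMap, edgeVector]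

lemma bearingField_apply (E : Fin m → Fin n × Fin n) (g : Fin m → EuclideanSpace ℝ (Fin d))
    (q : Configuration d n) (i : Fin n) :
    bearingField E g q i =
      ∑ k, ((if (E k).2 = i then (1 : ℝ) else 0) - if (E k).1 = i then (1 : ℝ) else 0) •
        projL (edgeVector E q k) (g k) :=
  rfl

lemma norm_edgeVector_le (E : ι → Fin n × Fin n) (q : Configuration d n) (k : ι) :
    ‖edgeVector E q k‖ ≤ 2 * ‖q‖ := calc
  ‖edgeVector E q k‖ ≤ ‖q (E k).2‖ + ‖q (E k).1‖ := norm_sub_le _ _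
  _ ≤ ‖q‖ + ‖q‖ := add_le_add (PiLp.norm_apply_le q _) (PiLp.norm_apply_le q _)
  _ = 2 * ‖q‖ := (two_mul _).symm

lemma tendsto_bearing {α : Type*} {l : Filter α} {E : ι → Fin n × Fin n}
    {q : α → Configuration d n} {r : Configuration d n} {k : ι} (hq : Tendsto q l (𝓝 r))
    (hk : edgeVector E r k ≠ 0) : Tendsto (fun a => bearing E (q a) k) l (𝓝 (bearing E r k)) := by
  have edgeVector_continuous : Continuous fun q : Configuration d n => edgeVector E q k := by
    unfold edgeVector; fun_prop
  have edgeVector_tendsto : Tendsto (fun a => edgeVector E (q a) k) l (𝓝 (edgeVector E r k)) :=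
    (edgeVector_continuous.tendsto r).comp hq
  exact (edgeVector_tendsto.norm.inv₀ (norm_ne_zero_iff.mpr hk)).smul edgeVector_tendsto

lemma mem_translations {τ : Configuration d n} :
    τ ∈ translations d n ↔ ∃ w, τ = WithLp.toLp 2 fun _ => w := by
  simp only [translations, Submodule.mem_map, LinearMap.mem_range, exists_exists_eq_and]
  exact exists_congr fun _ => eq_comm

lemma edgeVector_eq_zero_of_mem_translations (E : ι → Fin n × Fin n) {τ : Configuration d n}
    (hτ : τ ∈ translations d n) (k : ι) : edgeVector E τ k = 0 := by
  obtain ⟨w, rfl⟩ := mem_translations.mp hτ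
  simp [edgeVector]

lemma edgeVector_sub_of_mem_translations (E : ι → Fin n × Fin n) (q : Configuration d n)
    {τ : Configuration d n} (hτ : τ ∈ translations d n) :
    edgeVector E (q - τ) = edgeVector E q := by
  funext k
  have edgeVector_sub : edgeVector E (q - τ) k = edgeVector E q k - edgeVector E τ k :=
    sub_sub_sub_comm _ _ _ _
  rw [edgeVector_sub, edgeVector_eq_zero_of_mem_translations E hτ, sub_zero]

lemma bearing_sub_of_mem_translations (E : ι → Fin n × Fin n) (r : Configuration d n)
    {τ : Configuration d n} (hτ : τ ∈ translations d n) : bearing E (r - τ) = bearing E r := by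
  funext k
  simp only [bearing, edgeVector_sub_of_mem_translations E r hτ]

lemma bearingField_sub_of_mem_translations (E : Fin m → Fin n × Fin n)
    (g : Fin m → EuclideanSpace ℝ (Fin d)) (q : Configuration d n) {τ : Configuration d n}
    (hτ : τ ∈ translations d n) : bearingField E g (q - τ) = bearingField E g q := by
  ext1 i
  simp only [bearingField_apply, edgeVector_sub_of_mem_translations E q hτ]

lemma InfinitesimallyBearingRigid.sub_of_mem_translations {E : ι → Fin n × Fin n}
    {r τ : Configuration d n} (hr : InfinitesimallyBearingRigid E r) (hτ : τ ∈ translations d n) :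
    InfinitesimallyBearingRigid E (r - τ) := by
  have rigidityMap_sub : rigidityMap E (r - τ) = rigidityMap E r := by
    ext1 q
    funext k
    simp only [rigidityMap_apply, edgeVector_sub_of_mem_translations E r hτ]
  rw [InfinitesimallyBearingRigid, rigidityMap_sub, sup_span_singleton_sub hτ]
  exact hr

lemma centroid_mem_translations (q : Configuration d n) : centroid q ∈ translations d n :=
  mem_translations.mpr ⟨_, rfl⟩

lemma sub_centroid_mem_orthogonal_translations (q : Configuration d n) :
    q - centroid q ∈ (translations d n)ᗮ := by
  have sum_sub_centroid : ∑ i, (q - centroid q) i = 0 := by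
    rcases eq_or_ne n 0 with rfl | hn
    · simp
    · have n_ne_zero : (n : ℝ) ≠ 0 := Nat.cast_ne_zero.mpr hn
      simp [centroid, ← Nat.cast_smul_eq_nsmul ℝ, smul_inv_smul₀ n_ne_zero]
  intro τ hτ
  obtain ⟨w, rfl⟩ := mem_translations.mp hτ
  rw [PiLp.inner_apply, ← inner_sum, sum_sub_centroid, inner_zero_right]

lemma sqrt_mean_norm_sub_centroid_sq (q : Configuration d n) :
    √((n : ℝ)⁻¹ * ∑ i, ‖q i - (n : ℝ)⁻¹ • ∑ l, q l‖ ^ 2) = √(n : ℝ)⁻¹ * ‖q - centroid q‖ := by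
  rw [Real.sqrt_mul (by positivity), PiLp.norm_eq_of_L2]
  rfl

lemma inner_bearingField (E : Fin m → Fin n × Fin n) (g : Fin m → EuclideanSpace ℝ (Fin d))
    (y q : Configuration d n) :
    ⟪y, bearingField E g q⟫_ℝ =
      ∑ k, ⟪edgeVector E y k, projL (edgeVector E q k) (g k)⟫_ℝ := by
  rw [PiLp.inner_apply]
  simp only [bearingField_apply, inner_sum, real_inner_smul_right]
  rw [Finset.sum_comm]
  refine Finset.sum_congr rfl fun k _ => ?_
  simp only [sub_mul, ite_mul, one_mul, zero_mul, Finset.sum_sub_distrib, Finset.sum_ite_eq,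
    Finset.mem_univ, if_true, edgeVector, inner_sub_left]

lemma bearingField_mem_orthogonal_translations (E : Fin m → Fin n × Fin n)
    (g : Fin m → EuclideanSpace ℝ (Fin d)) (q : Configuration d n) :
    bearingField E g q ∈ (translations d n)ᗮ := fun τ hτ => by
  simp [inner_bearingField, edgeVector_eq_zero_of_mem_translations E hτ]

lemma inner_self_bearingField (E : Fin m → Fin n × Fin n)
    (g : Fin m → EuclideanSpace ℝ (Fin d)) (q : Configuration d n) :
    ⟪q, bearingField E g q⟫_ℝ = 0 := by
  rw [inner_bearingField]
  refine Finset.sum_eq_zero fun k _ => ?_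
  rw [projL_apply_eq_starProjection]
  exact Submodule.mem_orthogonal_singleton_iff_inner_right.mp
    (Submodule.starProjection_apply_mem _ _)

lemma inner_edgeVector_projL_bearing (E : ι → Fin n × Fin n) (r : Configuration d n) (k : ι)
    (x : EuclideanSpace ℝ (Fin d)) :
    ⟪edgeVector E r k, projL x (bearing E r k)⟫_ℝ =
      ‖edgeVector E r k‖⁻¹ * ‖projL x (edgeVector E r k)‖ ^ 2 := by
  rw [bearing, map_smul, real_inner_smul_right, projL_apply_eq_starProjection,
    inner_starProjection_self]

lemma inner_edgeVector_projL_bearing_nonneg (E : ι → Fin n × Fin n) (r : Configuration d n) (k : ι)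
    (x : EuclideanSpace ℝ (Fin d)) : 0 ≤ ⟪edgeVector E r k, projL x (bearing E r k)⟫_ℝ := by
  rw [inner_edgeVector_projL_bearing]
  positivity

lemma norm_rigidityMap_apply_sq (E : ι → Fin n × Fin n) (r q : Configuration d n) (k : ι) :
    ‖rigidityMap E r q k‖ ^ 2 = (‖edgeVector E r k‖ ^ 3)⁻¹ * ‖edgeVector E q k‖ ^ 2 *
      ⟪edgeVector E r k, projL (edgeVector E q k) (bearing E r k)⟫_ℝ := by
  have swap := norm_sq_mul_norm_sq_starProjection_orthogonal_singleton_comm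
    (edgeVector E r k) (edgeVector E q k)
  simp only [← projL_apply_eq_starProjection] at swap
  rw [rigidityMap_apply, inner_edgeVector_projL_bearing, norm_smul, norm_inv, norm_norm]
  rcases eq_or_ne (edgeVector E r k) 0 with hk | hk
  · simp [hk]
  have norm_ne_zero : ‖edgeVector E r k‖ ≠ 0 := norm_ne_zero_iff.mpr hk
  field_simp
  linear_combination swap

lemma inner_bearingField_nonneg (E : Fin m → Fin n × Fin n) (r q : Configuration d n) :
    0 ≤ ⟪r, bearingField E (bearing E r) q⟫_ℝ := by
  rw [inner_bearingField]
  exact Finset.sum_nonneg fun k _ => inner_edgeVector_projL_bearing_nonneg E r k _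

lemma norm_rigidityMap_sq_le (E : Fin m → Fin n × Fin n) (r q : Configuration d n) :
    ‖rigidityMap E r q‖ ^ 2 ≤ (∑ k, (‖edgeVector E r k‖ ^ 3)⁻¹) * (2 * ‖q‖) ^ 2 *
      ⟪r, bearingField E (bearing E r) q⟫_ℝ := by
  have bound_nonneg := inner_bearingField_nonneg E r q
  refine pi_norm_sq_le (by positivity) fun k => ?_
  have inverse_cube_le : (‖edgeVector E r k‖ ^ 3)⁻¹ ≤ ∑ k, (‖edgeVector E r k‖ ^ 3)⁻¹ :=
    Finset.single_le_sum (f := fun k => (‖edgeVector E r k‖ ^ 3)⁻¹) (fun _ _ => by positivity)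
      (Finset.mem_univ k)
  have term_le : ⟪edgeVector E r k, projL (edgeVector E q k) (bearing E r k)⟫_ℝ ≤
      ⟪r, bearingField E (bearing E r) q⟫_ℝ := by
    rw [inner_bearingField]
    exact Finset.single_le_sum (f := fun k =>
      ⟪edgeVector E r k, projL (edgeVector E q k) (bearing E r k)⟫_ℝ)
      (fun _ _ => inner_edgeVector_projL_bearing_nonneg E r _ _) (Finset.mem_univ k)
  have term_nonneg := inner_edgeVector_projL_bearing_nonneg E r k (edgeVector E q k)
  rw [norm_rigidityMap_apply_sq]
  gcongr
  exact norm_edgeVector_le E q k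

lemma exists_mul_norm_starProjection_sq_le_inner_bearingField {E : Fin m → Fin n × Fin n}
    {r : Configuration d n} (hr : r ∈ (translations d n)ᗮ)
    (hrigid : InfinitesimallyBearingRigid E r) (ρ : ℝ) :
    ∃ μ > 0, ∀ q ∈ (translations d n)ᗮ, ‖q‖ ≤ ρ →
      μ * ‖(ℝ ∙ r)ᗮ.starProjection q‖ ^ 2 ≤ ⟪r, bearingField E (bearing E r) q⟫_ℝ := by
  obtain ⟨K, -, hcoercive⟩ := exists_norm_starProjection_le_of_ker_eq_sup_span hr hrigid
  have A_nonneg : 0 ≤ K ^ 2 * ((∑ k, (‖edgeVector E r k‖ ^ 3)⁻¹) * (2 * ρ) ^ 2) := by positivity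
  set A := K ^ 2 * ((∑ k, (‖edgeVector E r k‖ ^ 3)⁻¹) * (2 * ρ) ^ 2) with A_def
  refine ⟨(A + 1)⁻¹, by positivity, fun q hq hqρ => ?_⟩
  have inner_nonneg := inner_bearingField_nonneg E r q
  rw [inv_mul_le_iff₀ (by positivity)]
  calc ‖(ℝ ∙ r)ᗮ.starProjection q‖ ^ 2
      ≤ (K * ‖rigidityMap E r q‖) ^ 2 := by gcongr; exact hcoercive q hq
    _ = K ^ 2 * ‖rigidityMap E r q‖ ^ 2 := mul_pow _ _ _
    _ ≤ K ^ 2 * ((∑ k, (‖edgeVector E r k‖ ^ 3)⁻¹) * (2 * ‖q‖) ^ 2 *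
          ⟪r, bearingField E (bearing E r) q⟫_ℝ) := by
        gcongr; exact norm_rigidityMap_sq_le E r q
    _ ≤ K ^ 2 * ((∑ k, (‖edgeVector E r k‖ ^ 3)⁻¹) * (2 * ρ) ^ 2 *
          ⟪r, bearingField E (bearing E r) q⟫_ℝ) := by gcongr
    _ = A * ⟪r, bearingField E (bearing E r) q⟫_ℝ := by rw [A_def]; ring
    _ ≤ (A + 1) * ⟪r, bearingField E (bearing E r) q⟫_ℝ := by gcongr; linarith

theorem exists_norm_sub_le_mul_exp_of_mem_orthogonal_translations {E : Fin m → Fin n × Fin n}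
    {r : Configuration d n} {q : ℝ → Configuration d n} (hr : r ∈ (translations d n)ᗮ)
    (hrigid : InfinitesimallyBearingRigid E r)
    (hq : ∀ t ∈ Ici (0 : ℝ), HasDerivWithinAt q (bearingField E (bearing E r) (q t)) (Ici 0) t)
    (hq0 : q 0 ∈ (translations d n)ᗮ) (hnorm : ‖q 0‖ = ‖r‖) (hne : q 0 ≠ -r) :
    ∃ C ≥ 0, ∃ lam > 0, ∀ t ≥ 0, ‖q t - r‖ ≤ C * Real.exp (-lam * t) := by
  have r_ne_zero : r ≠ 0 := fun h => hne <| by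
    rw [h, neg_zero, ← norm_eq_zero, hnorm, h, norm_zero]
  have antipode_dist_pos : 0 < ‖q 0 + r‖ := norm_pos_iff.mpr fun h =>
    hne (eq_neg_of_add_eq_zero_left h)
  have tangent : ∀ t ∈ Ici (0 : ℝ), ⟪q t, bearingField E (bearing E r) (q t)⟫_ℝ = 0 :=
    fun t _ => inner_self_bearingField E _ (q t)
  have norm_eq : ∀ t ∈ Ici (0 : ℝ), ‖q t‖ = ‖r‖ := fun t ht =>
    (norm_eq_of_hasDerivWithinAt_of_inner_eq_zero hq tangent ht).trans hnorm
  have centered : ∀ t ∈ Ici (0 : ℝ), q t ∈ (translations d n)ᗮ := fun t ht =>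
    mem_orthogonal_of_hasDerivWithinAt hq
      (fun s _ => bearingField_mem_orthogonal_translations E _ (q s)) hq0 ht
  obtain ⟨μ, hμ, hdissipation⟩ :=
    exists_mul_norm_starProjection_sq_le_inner_bearingField hr hrigid ‖r‖
  exact ⟨‖q 0 - r‖, norm_nonneg _, μ * ‖q 0 + r‖ ^ 2 / (4 * ‖r‖ ^ 2), by positivity, fun t ht =>
    norm_sub_le_mul_exp_of_norm_sq_starProjection_le r_ne_zero hμ.le hq tangent hnorm
      (fun s hs => hdissipation (q s) (centered s hs) (norm_eq s hs).le) ht⟩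

theorem exists_norm_sub_le_mul_exp {E : Fin m → Fin n × Fin n}
    {r : Configuration d n} {q : ℝ → Configuration d n} (hrigid : InfinitesimallyBearingRigid E r)
    (hq : ∀ t ∈ Ici (0 : ℝ), HasDerivWithinAt q (bearingField E (bearing E r) (q t)) (Ici 0) t)
    (hcentroid : centroid (q 0) = centroid r)
    (hnorm : ‖q 0 - centroid (q 0)‖ = ‖r - centroid r‖) (hne : q 0 ≠ -r + (2 : ℝ) • centroid r) :
    ∃ C ≥ 0, ∃ lam > 0, ∀ t ≥ 0, ‖q t - r‖ ≤ C * Real.exp (-lam * t) := by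
  have centroid_mem := centroid_mem_translations r
  have q0_centered := sub_centroid_mem_orthogonal_translations (q 0)
  rw [hcentroid] at hnorm q0_centered
  have shifted_deriv : ∀ t ∈ Ici (0 : ℝ), HasDerivWithinAt (fun s => q s - centroid r)
      (bearingField E (bearing E (r - centroid r)) (q t - centroid r)) (Ici 0) t := fun t ht => by
    rw [bearing_sub_of_mem_translations E r centroid_mem,
      bearingField_sub_of_mem_translations E _ (q t) centroid_mem]
    exact (hq t ht).sub_const _
  have shifted_ne : q 0 - centroid r ≠ -(r - centroid r) := fun h => hne <| by
    rw [← sub_add_cancel (q 0) (centroid r), h, two_smul]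
    abel
  simpa only [sub_sub_sub_cancel_right] using
    exists_norm_sub_le_mul_exp_of_mem_orthogonal_translations
      (sub_centroid_mem_orthogonal_translations r) (hrigid.sub_of_mem_translations centroid_mem)
      shifted_deriv q0_centered hnorm shifted_ne

lemma infinitesimallyBearingRigid_toLp {E : ι → Fin n × Fin n}
    {p : Fin n → EuclideanSpace ℝ (Fin d)}
    (hp : LinearMap.ker (bearingMap E p) = LinearMap.range (constLM d n) ⊔ ℝ ∙ p) :
    InfinitesimallyBearingRigid E (WithLp.toLp 2 p) := by
  have ker_eq_map : LinearMap.ker (rigidityMap E (WithLp.toLp 2 p)) =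
      (LinearMap.ker (bearingMap E p)).map (WithLp.linearEquiv 2 ℝ _).symm.toLinearMap := by
    rw [rigidityMap, LinearMap.ker_comp, Submodule.map_equiv_eq_comap_symm]
    rfl
  rw [InfinitesimallyBearingRigid, ker_eq_map, hp, Submodule.map_sup, Submodule.map_span,
    Set.image_singleton]
  rfl

lemma hasDerivWithinAt_toLp {p : ℝ → Fin n → EuclideanSpace ℝ (Fin d)}
    {p' : Fin n → EuclideanSpace ℝ (Fin d)} {s : Set ℝ} {t : ℝ} (hp : HasDerivWithinAt p p' s t) :
    HasDerivWithinAt (fun u => WithLp.toLp 2 (p u) : ℝ → Configuration d n)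
      (WithLp.toLp 2 p') s t :=
  (PiLp.continuousLinearEquiv 2 ℝ fun _ : Fin n => EuclideanSpace ℝ (Fin d)).symm
    |>.toContinuousLinearMap.hasFDerivAt.comp_hasDerivWithinAt t hp

lemma norm_sub_centroid_eq_of_scale_eq {q r : Configuration d n}
    (h : √((n : ℝ)⁻¹ * ∑ i, ‖q i - (n : ℝ)⁻¹ • ∑ l, q l‖ ^ 2) =
      √((n : ℝ)⁻¹ * ∑ i, ‖r i - (n : ℝ)⁻¹ • ∑ l, r l‖ ^ 2)) :
    ‖q - centroid q‖ = ‖r - centroid r‖ := by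
  rcases eq_or_ne n 0 with rfl | hn
  · rw [Subsingleton.elim q r]
  rw [sqrt_mean_norm_sub_centroid_sq, sqrt_mean_norm_sub_centroid_sq] at h
  have factor_ne_zero : √(n : ℝ)⁻¹ ≠ 0 := by positivity
  exact mul_left_cancel₀ factor_ne_zero h

end Formation

end BearingFormation

open BearingFormation

/-- Almost global exponential stability: if the target formation `G(p*)`
is infinitesimally bearing rigid with bearings `g*`, and `p(t)` solves
`ṗ = (H ⊗ I_d)ᵀ diag(P_{g_k(t)}) g*` on `[0, ∞)` with the same centroid and scale as `p*`
and `p(0)` is not the point reflection `-p* + 2(1_n ⊗ p̄*)`, then `‖p(t) - p*‖ ≤ C e^{-λt}`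
for some `C ≥ 0`, `λ > 0`; in particular all bearings `g_k(t) → g*_k`. -/
theorem almost_global_exponential_stability {d n m : ℕ} (hd : 2 ≤ d) (hn : 2 ≤ n)
    (E : Fin m → Fin n × Fin n)
    (pstar : Fin n → EuclideanSpace ℝ (Fin d))
    (hpstar : ∀ k, pstar (E k).1 ≠ pstar (E k).2)
    (gstar : Fin m → EuclideanSpace ℝ (Fin d))
    (hgstar : ∀ k, gstar k =
      ‖pstar (E k).2 - pstar (E k).1‖⁻¹ • (pstar (E k).2 - pstar (E k).1))
    (hibr : LinearMap.ker (bearingMap E pstar) =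
      LinearMap.range (constLM d n) ⊔ Submodule.span ℝ {pstar})
    (p : ℝ → Fin n → EuclideanSpace ℝ (Fin d))
    (hderiv : ∀ t ∈ Set.Ici (0 : ℝ),
      HasDerivWithinAt p (bearingCtrl E gstar (p t)) (Set.Ici 0) t)
    (hne : ∀ t ∈ Set.Ici (0 : ℝ), ∀ k, p t (E k).1 ≠ p t (E k).2)
    (hcent : (n : ℝ)⁻¹ • ∑ i, p 0 i = (n : ℝ)⁻¹ • ∑ i, pstar i)
    (hscale : Real.sqrt ((n : ℝ)⁻¹ * ∑ i, ‖p 0 i - (n : ℝ)⁻¹ • ∑ l, p 0 l‖ ^ 2) =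
      Real.sqrt ((n : ℝ)⁻¹ * ∑ i, ‖pstar i - (n : ℝ)⁻¹ • ∑ l, pstar l‖ ^ 2))
    (hinit : p 0 ≠ fun i => -pstar i + (2 : ℝ) • ((n : ℝ)⁻¹ • ∑ l, pstar l)) :
    (∃ C ≥ (0 : ℝ), ∃ lam > (0 : ℝ), ∀ t ≥ (0 : ℝ),
        Real.sqrt (∑ i, ‖p t i - pstar i‖ ^ 2) ≤ C * Real.exp (-lam * t)) ∧
    ∀ k, Filter.Tendsto
      (fun t => ‖p t (E k).2 - p t (E k).1‖⁻¹ • (p t (E k).2 - p t (E k).1))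
      Filter.atTop (nhds (gstar k)) := by
  have bearing_eq : gstar = bearing E (WithLp.toLp 2 pstar) := funext hgstar
  obtain ⟨C, hC, lam, hlam, hbound⟩ :=
    exists_norm_sub_le_mul_exp (q := fun t => WithLp.toLp 2 (p t))
      (infinitesimallyBearingRigid_toLp hibr)
      (fun t ht => hasDerivWithinAt_toLp (bearing_eq ▸ hderiv t ht))
      (congrArg (fun c => WithLp.toLp 2 fun _ => c) hcent)
      (norm_sub_centroid_eq_of_scale_eq hscale) (fun h => hinit (congrArg WithLp.ofLp h))
  refine ⟨⟨C, hC, lam, hlam, fun t ht => ?_⟩, fun k => ?_⟩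
  · simpa [PiLp.norm_eq_of_L2] using hbound t ht
  · have edge_ne_zero : edgeVector E (WithLp.toLp 2 pstar) k ≠ 0 := sub_ne_zero.mpr (hpstar k).symm
    have tendsto_pstar : Tendsto (fun t => WithLp.toLp 2 (p t)) atTop (𝓝 (WithLp.toLp 2 pstar)) :=
      tendsto_of_norm_sub_le_mul_exp hlam hbound
    have bearing_tendsto := tendsto_bearing tendsto_pstar edge_ne_zero
    rwa [bearing_eq]
end
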